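/- The double series Σ_{p,q≥0} z_{p,q}·u^p·v^q converges absolutely (i.e. Σ_{p,q≥0} z_{p,q}·|u|^p·|v|^q < ∞) if and only if |u| ≤ u_c and |v| ≤ u_c. -/

import Mathlib

noncomputable def nuc : ℝ := 1 + 2 * Real.sqrt 7

noncomputable def tc : ℝ := Real.sqrt 10 / (8 * (7 + Real.sqrt 7) ^ ((3:ℝ)/2))

noncomputable def uc : ℝ := (6/5) * (7 + Real.sqrt 7) * tc

/-- The rational parametrization `û` of the `u`-variable. -/
noncomputable def uhat (H : ℂ) : ℂ :=
  ((uc : ℂ) / 3) * H * (10 - 12 * H + 6 * H ^ 2 - H ^ 3)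

/-- The rational parametrization `Ẑ₀`. -/
noncomputable def Z0hat (H : ℂ) : ℂ :=
  (1/10) * (1 - (1 - (Real.sqrt 7 : ℂ)) * H + 3 * H ^ 2 - H ^ 3)
    * (10 - 12 * H + 6 * H ^ 2 - H ^ 3)

/-- The rational parametrization `Ẑ₁`. -/
noncomputable def Z1hat (H : ℂ) : ℂ :=
  (3 / (10 * (uc : ℂ))) *
    ((Real.sqrt 7 : ℂ) - 1 + H - 3 * (4 - 3 * H + H ^ 2) / (10 - 12 * H + 6 * H ^ 2 - H ^ 3))

/-- The rational parametrization `Â`. -/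
noncomputable def Ahat (H : ℂ) : ℂ :=
  (1/10) * ((((3:ℝ)/2) ^ ((7:ℝ)/3) : ℝ) : ℂ) * (9 - 8 * H + 3 * H ^ 2) / (3 - 3 * H + H ^ 2) ^ 2

/-!
On the diagonal `H = K` the equation for `Z` becomes linear with explicit coefficients, and
cancelling the common factor `(1 - H) ^ 3` leaves a rational function of `H` without poles on
`[0, 1]`. It is the sum of the one-variable series with the nonnegative coefficients
`∑_{p + q = n} z_{p,q}`. As `h ↦ û(h)` is an analytic bijection from `(0, 1)` onto `(0, u_c)`,
Pringsheim's theorem propagates this identity from small `h` to all of `(0, 1)`, and boundedness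
at `h = 1` gives convergence at `u = v = u_c`, which dominates every `|u|, |v| ≤ u_c`.

Conversely, convergence of the double series implies convergence of the series of the `z_{p,0}`
and of the `z_{0,q}`, both of which sum to `Z₀`. Beyond `u_c` this is impossible: `û` is critical
at `h = 1`, so if `Z₀` were analytic at `u_c`, then `dZ₀/du` would be stationary in `h` at `1`,
which its explicit form rules out.
-/

open Filter Topology Set
open Finset.HasAntidiagonal (antidiagonal)

/-! ### Power series -/

theorem hasSum_sum_antidiagonal_iff_of_nonneg {A : Type*} [AddMonoid A] [Finset.HasAntidiagonal A]
    {f : A × A → ℝ} (hf : ∀ p, 0 ≤ f p) {S : ℝ} :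
    HasSum (fun n => ∑ p ∈ antidiagonal n, f p) S ↔ HasSum f S := by
  rw [← Finset.HasAntidiagonal.sigmaAntidiagonalEquivProd.hasSum_iff]
  have hfiber : ∀ n : A, HasSum (fun p : antidiagonal n => f p)
      (∑ p ∈ antidiagonal n, f p) := fun n => Finset.hasSum _ f
  refine ⟨fun h => h.sigma_of_hasSum hfiber ?_, fun h => h.sigma hfiber⟩
  refine (summable_sigma_of_nonneg fun x => hf _).mpr ⟨fun n => (hfiber n).summable, ?_⟩
  exact h.summable.congr fun n => (hfiber n).tsum_eq.symm

theorem summable_of_tendsto_of_isBoundedUnder_hasSum {ι α : Type*} {l : Filter α} [l.NeBot]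
    {f : α → ι → ℝ} {g : ι → ℝ} {R : α → ℝ} (hf : ∀ᶠ a in l, ∀ i, 0 ≤ f a i)
    (hfg : ∀ i, Tendsto (fun a => f a i) l (𝓝 (g i))) (hsum : ∀ᶠ a in l, HasSum (f a) (R a))
    (hR : l.IsBoundedUnder (· ≤ ·) R) : Summable g := by
  obtain ⟨C, hC⟩ := hR
  have hg : ∀ i, 0 ≤ g i := fun i => ge_of_tendsto (hfg i) (hf.mono fun a ha => ha i)
  refine summable_of_sum_le (c := C) hg fun s =>
    le_of_tendsto (tendsto_finsetSum s fun i _ => hfg i) ?_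
  filter_upwards [hf, hsum, eventually_map.mp hC] with a hfa hfR hRC
  exact (sum_le_hasSum s (fun i _ => hfa i) hfR).trans hRC

section PowerSeries

variable {a : ℕ → ℝ} {r x : ℝ}

theorem summable_mul_pow_of_le (ha : ∀ n, 0 ≤ a n) (hx : 0 ≤ x) (hxr : x ≤ r)
    (hr : Summable fun n => a n * r ^ n) : Summable fun n => a n * x ^ n :=
  hr.of_nonneg_of_le (fun n => mul_nonneg (ha n) (pow_nonneg hx n)) fun n =>
    mul_le_mul_of_nonneg_left (pow_le_pow_left₀ hx hxr n) (ha n)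

theorem hasFPowerSeriesOnBall_tsum_mul_pow (hr : 0 < r) (hs : Summable fun n => a n * r ^ n) :
    HasFPowerSeriesOnBall (fun u => ∑' n, a n * u ^ n) (.ofScalars ℝ a) 0 (ENNReal.ofReal r) := by
  have hradius : ENNReal.ofReal r ≤ (FormalMultilinearSeries.ofScalars ℝ a).radius := by
    refine FormalMultilinearSeries.le_radius_of_summable _ (hs.abs.congr fun n => ?_)
    rw [FormalMultilinearSeries.ofScalars_norm, Real.coe_toNNReal r hr.le, abs_mul, abs_pow,
      abs_of_pos hr, Real.norm_eq_abs]
  have hpos := ENNReal.ofReal_pos.mpr hr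
  refine ((FormalMultilinearSeries.hasFPowerSeriesOnBall _ (hpos.trans_le hradius)).mono hpos
    hradius).congr fun u _ => FormalMultilinearSeries.ofScalars_sum_eq a u

theorem analyticAt_tsum_mul_pow (hx : 0 ≤ x) (hxr : x < r) (hs : Summable fun n => a n * r ^ n) :
    AnalyticAt ℝ (fun u => ∑' n, a n * u ^ n) x := by
  refine (hasFPowerSeriesOnBall_tsum_mul_pow (hx.trans_lt hxr) hs).analyticAt_of_mem ?_
  simpa [Metric.mem_eball, edist_dist, abs_of_nonneg hx, hx.trans_lt hxr] using hxr

/-- The coefficients of `∑ aₙ uⁿ` expanded around `x` instead of `0`. The index is shifted so that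
the binomial coefficient `(k + m).choose k` needs no truncated subtraction. -/
noncomputable def taylorCoeff (a : ℕ → ℝ) (x : ℝ) (k : ℕ) : ℝ :=
  ∑' m, a (k + m) * (k + m).choose k * x ^ m

theorem hasSum_mul_add_pow_iff (ha : ∀ n, 0 ≤ a n) (hx : 0 ≤ x) {t S : ℝ} (ht : 0 ≤ t) :
    HasSum (fun n => a n * (t + x) ^ n) S ↔ HasSum (fun km : ℕ × ℕ =>
      a (km.1 + km.2) * (km.1 + km.2).choose km.1 * x ^ km.2 * t ^ km.1) S := by
  rw [← hasSum_sum_antidiagonal_iff_of_nonneg fun km => by have := ha (km.1 + km.2); positivity]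
  refine iff_of_eq (congrArg (HasSum · S) (funext fun n => ?_))
  rw [(Commute.all t x).add_pow', Finset.mul_sum]
  refine Finset.sum_congr rfl fun km hkm => ?_
  rw [Finset.HasAntidiagonal.mem_antidiagonal.mp hkm, nsmul_eq_mul]
  ring

theorem summable_taylorCoeff_term (ha : ∀ n, 0 ≤ a n) (hx : 0 ≤ x) (hxr : x < r)
    (hr : Summable fun n => a n * r ^ n) (k : ℕ) :
    Summable fun m => a (k + m) * (k + m).choose k * x ^ m := by
  have ht : 0 < r - x := sub_pos.mpr hxr
  have hterms := ((hasSum_mul_add_pow_iff ha hx ht.le).mp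
    (by simpa only [sub_add_cancel] using hr.hasSum)).summable
  exact (summable_mul_right_iff (pow_pos ht k).ne').mp (hterms.prod_factor k)

theorem hasSum_taylorCoeff_mul_pow_iff (ha : ∀ n, 0 ≤ a n) (hx : 0 ≤ x) (hxr : x < r)
    (hr : Summable fun n => a n * r ^ n) {t S : ℝ} (ht : 0 ≤ t) :
    HasSum (fun k => taylorCoeff a x k * t ^ k) S ↔ HasSum (fun n => a n * (t + x) ^ n) S := by
  rw [hasSum_mul_add_pow_iff ha hx ht, ← (Equiv.sigmaEquivProd ℕ ℕ).hasSum_iff]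
  have hfiber : ∀ k, HasSum (fun m => a (k + m) * (k + m).choose k * x ^ m * t ^ k)
      (taylorCoeff a x k * t ^ k) := fun k =>
    (summable_taylorCoeff_term ha hx hxr hr k).hasSum.mul_right _
  refine ⟨fun h => h.sigma_of_hasSum hfiber ?_, fun h => h.sigma hfiber⟩
  refine (summable_sigma_of_nonneg fun km => ?_).mpr ⟨fun k => (hfiber k).summable, ?_⟩
  · have := ha (km.1 + km.2)
    dsimp only [Function.comp, Equiv.sigmaEquivProd_apply]
    positivity
  · exact h.summable.congr fun k => (hfiber k).tsum_eq.symm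

theorem hasFPowerSeriesAt_tsum_mul_pow (ha : ∀ n, 0 ≤ a n) (hx : 0 ≤ x) (hxr : x < r)
    (hr : Summable fun n => a n * r ^ n) :
    HasFPowerSeriesAt (fun u => ∑' n, a n * u ^ n) (.ofScalars ℝ (taylorCoeff a x)) x := by
  have hdist : 0 < r - x := sub_pos.mpr hxr
  have hshift : ∀ t ∈ Ioo 0 (r - x),
      ∑' k, taylorCoeff a x k * t ^ k = ∑' n, a n * (t + x) ^ n := fun t ht =>
    ((hasSum_taylorCoeff_mul_pow_iff ha hx hxr hr ht.1.le).mpr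
      (summable_mul_pow_of_le ha (by linarith [ht.1]) (by linarith [ht.2]) hr).hasSum).tsum_eq
  have htaylor : HasFPowerSeriesAt (fun t => ∑' k, taylorCoeff a x k * t ^ k)
      (.ofScalars ℝ (taylorCoeff a x)) 0 := by
    refine (hasFPowerSeriesOnBall_tsum_mul_pow hdist ?_).hasFPowerSeriesAt
    exact ((hasSum_taylorCoeff_mul_pow_iff ha hx hxr hr hdist.le).mpr
      (by simpa only [sub_add_cancel] using hr.hasSum)).summable
  have hanalytic : AnalyticAt ℝ (fun t => ∑' n, a n * (t + x) ^ n) 0 :=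
    AnalyticAt.fun_comp (g := fun u => ∑' n, a n * u ^ n) (f := fun t => t + x)
      (by simpa only [zero_add] using analyticAt_tsum_mul_pow hx hxr hr) (by fun_prop)
  have heq := (htaylor.analyticAt.frequently_eq_iff_eventually_eq hanalytic).mp <|
    ((eventually_of_mem (Ioo_mem_nhdsGT hdist) hshift).frequently).filter_mono
      (nhdsWithin_mono 0 fun t (ht : 0 < t) => ht.ne')
  simpa using (htaylor.congr heq).comp_sub x

theorem summable_mul_add_pow_of_hasFPowerSeriesOnBall (ha : ∀ n, 0 ≤ a n) (hx : 0 ≤ x)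
    (hxr : x < r) (hr : Summable fun n => a n * r ^ n) {g : ℝ → ℝ}
    {p : FormalMultilinearSeries ℝ ℝ ℝ} {R : ENNReal} (hg : HasFPowerSeriesOnBall g p x R)
    (hga : ∀ᶠ u in 𝓝 x, g u = ∑' n, a n * u ^ n) {t : ℝ} (ht : 0 ≤ t)
    (htR : ENNReal.ofReal t < R) : Summable fun n => a n * (t + x) ^ n := by
  have hp : p = .ofScalars ℝ (taylorCoeff a x) :=
    hg.hasFPowerSeriesAt.eq_formalMultilinearSeries_of_eventually
      (hasFPowerSeriesAt_tsum_mul_pow ha hx hxr hr) hga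
  have hmem : t ∈ Metric.eball (0 : ℝ) R := by
    rwa [Metric.mem_eball, edist_dist, dist_zero_right, Real.norm_of_nonneg ht]
  have htaylor := hg.hasSum hmem
  simp only [hp, FormalMultilinearSeries.ofScalars_apply_eq, smul_eq_mul] at htaylor
  exact ((hasSum_taylorCoeff_mul_pow_iff ha hx hxr hr ht).mp htaylor).summable

/-- Pringsheim's theorem. Expand around a point `x` slightly to the left of `r`, where the Taylor
coefficients are nonnegative: the Taylor series of `g` at `x` converges a little beyond `r`, and
rearranging its nonnegative terms gives back the original series. -/
theorem exists_gt_summable_of_analyticAt (ha : ∀ n, 0 ≤ a n) (hr : 0 < r)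
    (hs : ∀ u ∈ Ioo 0 r, Summable fun n => a n * u ^ n) {g : ℝ → ℝ} (hg : AnalyticAt ℝ g r)
    (hgs : ∀ᶠ u in 𝓝[<] r, g u = ∑' n, a n * u ^ n) :
    ∃ r' > r, Summable fun n => a n * r' ^ n := by
  obtain ⟨p, R, hp⟩ := hg
  obtain ⟨b, hbr, hb⟩ := mem_nhdsLT_iff_exists_Ioo_subset.mp hgs
  rw [mem_Iio] at hbr
  obtain ⟨d, hd, hdR⟩ := ENNReal.lt_iff_exists_nnreal_btwn.mp hp.r_pos
  have hd : 0 < (d : ℝ) := mod_cast hd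
  obtain ⟨x, hx, hxr⟩ := exists_between (max_lt (max_lt hr hbr) (sub_lt_self r (half_pos hd)))
  simp only [max_lt_iff] at hx
  obtain ⟨⟨hx0, hbx⟩, hdx⟩ := hx
  have hnorm : (‖x - r‖₊ : ℝ) = r - x := by
    rw [coe_nnnorm, Real.norm_eq_abs, abs_sub_comm, abs_of_pos (sub_pos.mpr hxr)]
  have hxd : ‖x - r‖₊ < d := by
    rw [← NNReal.coe_lt_coe, hnorm]
    linarith
  have hgx : HasFPowerSeriesOnBall g (p.changeOrigin (x - r)) x (d - ‖x - r‖₊) := by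
    simpa only [add_sub_cancel] using
      (hp.mono (mod_cast hd) hdR.le).changeOrigin (y := x - r) (mod_cast hxd)
  have hball : ENNReal.ofReal (d / 2) < d - ‖x - r‖₊ := by
    rw [← ENNReal.coe_sub, ENNReal.ofReal_lt_coe_iff (half_pos hd).le, NNReal.coe_sub hxd.le, hnorm]
    linarith
  obtain ⟨y, hxy, hyr⟩ := exists_between hxr
  exact ⟨d / 2 + x, by linarith, summable_mul_add_pow_of_hasFPowerSeriesOnBall ha hx0.le hxy
    (hs y ⟨hx0.trans hxy, hyr⟩) hgx (eventually_of_mem (Ioo_mem_nhds hbx hxr) hb)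
    (half_pos hd).le hball⟩

theorem tsum_mul_pow_eqOn_of_analyticOnNhd {l : ℝ} (hl : 0 ≤ l) {g : ℝ → ℝ}
    (hs : ∀ u ∈ Ioo l r, Summable fun n => a n * u ^ n) (hg : AnalyticOnNhd ℝ g (Ioo l r))
    (hx : x ∈ Ioo l r) (hgx : ∀ᶠ u in 𝓝 x, HasSum (fun n => a n * u ^ n) (g u)) :
    EqOn (fun u => ∑' n, a n * u ^ n) g (Ioo l r) := by
  have hanalytic : AnalyticOnNhd ℝ (fun u => ∑' n, a n * u ^ n) (Ioo l r) := fun u hu => by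
    obtain ⟨v, huv, hvr⟩ := exists_between hu.2
    exact analyticAt_tsum_mul_pow (hl.trans hu.1.le) huv (hs v ⟨hu.1.trans huv, hvr⟩)
  exact hanalytic.eqOn_of_preconnected_of_eventuallyEq hg isPreconnected_Ioo hx
    (hgx.mono fun u hu => hu.tsum_eq)

/-- If the interval of convergence stopped inside `(l, R)`, Pringsheim's theorem at its endpoint
would enlarge it. -/
theorem hasSum_mul_pow_of_analyticOnNhd (ha : ∀ n, 0 ≤ a n) {l R : ℝ} (hl : 0 ≤ l) {g : ℝ → ℝ}
    (hg : AnalyticOnNhd ℝ g (Ioo l R)) (hx : x ∈ Ioo l R)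
    (hgx : ∀ᶠ u in 𝓝 x, HasSum (fun n => a n * u ^ n) (g u)) {u : ℝ} (hu : u ∈ Ioo l R) :
    HasSum (fun n => a n * u ^ n) (g u) := by
  have hsummable : ∀ w ∈ Ioo l R, Summable fun n => a n * w ^ n := by
    by_contra! ⟨w, hw, hwdiv⟩
    set s := {t : ℝ | 0 ≤ t ∧ Summable fun n => a n * t ^ n}
    have hsw : w ∈ upperBounds s := fun t ht => le_of_not_gt fun hwt =>
      hwdiv (summable_mul_pow_of_le ha (hl.trans hw.1.le) hwt.le ht.2)
    have hbdd : BddAbove s := ⟨w, hsw⟩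
    obtain ⟨y, hy, hxy⟩ := ((hgx.filter_mono nhdsWithin_le_nhds).and
      (self_mem_nhdsWithin (s := Ioi x))).exists
    have hys : y ∈ s := ⟨hl.trans (hx.1.trans hxy).le, hy.summable⟩
    have hxr : x < sSup s := lt_of_lt_of_le hxy (le_csSup hbdd hys)
    have hrR : sSup s < R := (csSup_le ⟨y, hys⟩ hsw).trans_lt hw.2
    have hbelow : ∀ t, 0 ≤ t → t < sSup s → Summable fun n => a n * t ^ n := fun t ht htr => by
      obtain ⟨v, hv, htv⟩ := exists_lt_of_lt_csSup ⟨y, hys⟩ htr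
      exact summable_mul_pow_of_le ha ht htv.le hv.2
    have hEq := tsum_mul_pow_eqOn_of_analyticOnNhd hl
      (fun t ht => hbelow t (hl.trans ht.1.le) ht.2)
      (hg.mono (Ioo_subset_Ioo_right hrR.le)) ⟨hx.1, hxr⟩ hgx
    have hlr : l < sSup s := hx.1.trans hxr
    obtain ⟨r', hr', hsr'⟩ := exists_gt_summable_of_analyticAt ha (hl.trans_lt hlr)
      (fun t ht => hbelow t ht.1.le ht.2) (hg _ ⟨hlr, hrR⟩)
      (eventually_of_mem (Ioo_mem_nhdsLT hlr) fun t ht => (hEq ht).symm)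
    exact (le_csSup hbdd ⟨(hl.trans_lt hlr).le.trans hr'.le, hsr'⟩).not_gt hr'
  rw [← tsum_mul_pow_eqOn_of_analyticOnNhd hl hsummable hg hx hgx hu]
  exact (hsummable u hu).hasSum

theorem hasSum_mul_pow_comp_of_analyticOnNhd (ha : ∀ n, 0 ≤ a n) {φ g : ℝ → ℝ} {b c : ℝ}
    (hφ : AnalyticOnNhd ℝ φ (Ioo b c)) (hφc : ContinuousOn φ (Icc b c))
    (hφ' : ∀ h ∈ Ioo b c, 0 < deriv φ h) (hφb : 0 ≤ φ b) (hg : AnalyticOnNhd ℝ g (Ioo b c))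
    (hgb : ∀ᶠ h in 𝓝[>] b, HasSum (fun n => a n * φ h ^ n) (g h)) {h : ℝ} (hh : h ∈ Ioo b c) :
    HasSum (fun n => a n * φ h ^ n) (g h) := by
  have hbc : b < c := hh.1.trans hh.2
  have hmono : StrictMonoOn φ (Icc b c) := strictMonoOn_of_deriv_pos (convex_Icc b c) hφc
    fun k hk => hφ' k (by rwa [interior_Icc] at hk)
  have hmaps : MapsTo φ (Ioo b c) (Ioo (φ b) (φ c)) := fun k hk =>
    ⟨hmono (left_mem_Icc.mpr hbc.le) (Ioo_subset_Icc_self hk) hk.1,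
      hmono (Ioo_subset_Icc_self hk) (right_mem_Icc.mpr hbc.le) hk.2⟩
  have hinv : LeftInvOn (Function.invFunOn φ (Ioo b c)) φ (Ioo b c) :=
    (hmono.injOn.mono Ioo_subset_Icc_self).leftInvOn_invFunOn
  have hanalytic : AnalyticOnNhd ℝ (g ∘ Function.invFunOn φ (Ioo b c)) (Ioo (φ b) (φ c)) := by
    intro u hu
    obtain ⟨k, hk, rfl⟩ := intermediate_value_Ioo hbc.le hφc hu
    refine (analyticAt_comp_iff_of_deriv_ne_zero (hφ k hk) (hφ' k hk).ne').mp ?_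
    exact (hg k hk).congr
      (eventually_of_mem (Ioo_mem_nhds hk.1 hk.2) fun t ht => congrArg g (hinv ht).symm)
  obtain ⟨d, hbd, hd⟩ := (mem_nhdsGT_iff_exists_Ioo_subset' hbc).mp hgb
  obtain ⟨x, hbx, hx⟩ := exists_between (lt_min hbd hbc)
  obtain ⟨hxd, hxc⟩ := lt_min_iff.mp hx
  have hlocal : ∀ᶠ u in 𝓝 (φ x), HasSum (fun n => a n * u ^ n)
      ((g ∘ Function.invFunOn φ (Ioo b c)) u) := by
    rw [← (hφ x ⟨hbx, hxc⟩).hasStrictDerivAt.map_nhds_eq (hφ' x ⟨hbx, hxc⟩).ne', eventually_map]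
    filter_upwards [Ioo_mem_nhds hbx hxd, Ioo_mem_nhds hbx hxc] with k hkd hkc
    rw [Function.comp_apply, hinv hkc]
    exact hd hkd
  have hsum := hasSum_mul_pow_of_analyticOnNhd ha hφb hanalytic (hmaps ⟨hbx, hxc⟩) hlocal (hmaps hh)
  rwa [Function.comp_apply, hinv hh] at hsum

end PowerSeries

theorem eq_zero_of_hasDerivAt_comp_critical {φ φ' f g F : ℝ → ℝ} {c F' : ℝ}
    (hφ : ∀ᶠ h in 𝓝 c, HasDerivAt φ (φ' h) h) (hφc : φ' c = 0)
    (hφ' : ∀ᶠ h in 𝓝[≠] c, φ' h ≠ 0) (hf : AnalyticAt ℝ f (φ c))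
    (hfg : ∀ᶠ h in 𝓝 c, f (φ h) = g h) (hg : ∀ᶠ h in 𝓝 c, HasDerivAt g (F h * φ' h) h)
    (hF : HasDerivAt F F' c) : F' = 0 := by
  have hφ₀ := hφ.self_of_nhds
  have hne : (deriv f ∘ φ) =ᶠ[𝓝[≠] c] F := by
    have hfφ : ∀ᶠ h in 𝓝 c, AnalyticAt ℝ f (φ h) :=
      hφ₀.continuousAt.eventually hf.eventually_analyticAt
    filter_upwards [hφ.filter_mono nhdsWithin_le_nhds, hφ', hfφ.filter_mono nhdsWithin_le_nhds,
      hfg.eventually_nhds.filter_mono nhdsWithin_le_nhds, hg.filter_mono nhdsWithin_le_nhds]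
      with h hφh hφ'h hfh hfgh hgh
    have hcomp := hfh.differentiableAt.hasDerivAt.comp h hφh
    exact mul_right_cancel₀ hφ'h ((hcomp.congr_of_eventuallyEq
      (hfgh.mono fun _ hk => hk.symm)).unique hgh)
  have hderiv : HasDerivAt (deriv f ∘ φ) 0 c := by
    simpa only [hφc, mul_zero] using hf.deriv.differentiableAt.hasDerivAt.comp c hφ₀
  have heq : (deriv f ∘ φ) =ᶠ[𝓝 c] F :=
    (hderiv.continuousAt.eventuallyEq_nhds_iff_eventuallyEq_nhdsNE hF.continuousAt).mp hne
  exact (hF.congr_of_eventuallyEq heq).unique hderiv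

theorem hasSum_mul_zero_pow_mul_pow_iff {R : Type*} [CommSemiring R] [TopologicalSpace R]
    {z : ℕ → ℕ → R} {v S : R} :
    HasSum (fun pq : ℕ × ℕ => z pq.1 pq.2 * 0 ^ pq.1 * v ^ pq.2) S ↔
      HasSum (fun q => z 0 q * v ^ q) S := by
  rw [← (Prod.mk_right_injective (0 : ℕ)).hasSum_iff fun pq hpq => ?_]
  · simp only [Function.comp_def, pow_zero, mul_one]
  · have : pq.1 ≠ 0 := fun h0 => hpq ⟨pq.2, Prod.ext h0.symm rfl⟩
    simp [this]

theorem hasSum_sum_antidiagonal_mul_pow_iff {z : ℕ → ℕ → ℝ} (hz : ∀ p q, 0 ≤ z p q) {u S : ℝ}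
    (hu : 0 ≤ u) :
    HasSum (fun n => (∑ pq ∈ antidiagonal n, z pq.1 pq.2) * u ^ n) S ↔
      HasSum (fun pq : ℕ × ℕ => z pq.1 pq.2 * u ^ pq.1 * u ^ pq.2) S := by
  rw [← hasSum_sum_antidiagonal_iff_of_nonneg fun pq => by have := hz pq.1 pq.2; positivity]
  refine iff_of_eq (congrArg (HasSum · S) (funext fun n => ?_))
  rw [Finset.sum_mul]
  refine Finset.sum_congr rfl fun pq hpq => ?_
  rw [mul_assoc, ← pow_add, Finset.HasAntidiagonal.mem_antidiagonal.mp hpq]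

/-! ### The parametrization on the real line -/

/-- The restriction of `uhat` to the real line. -/
noncomputable def uReal (h : ℝ) : ℝ := uc / 3 * h * (10 - 12 * h + 6 * h ^ 2 - h ^ 3)

/-- The restriction of `Z0hat` to the real line. -/
noncomputable def Z0Real (h : ℝ) : ℝ :=
  1 / 10 * (1 - (1 - Real.sqrt 7) * h + 3 * h ^ 2 - h ^ 3) * (10 - 12 * h + 6 * h ^ 2 - h ^ 3)

theorem uhat_ofReal (h : ℝ) : uhat h = uReal h := by
  simp [uhat, uReal]

theorem Z0hat_ofReal (h : ℝ) : Z0hat h = Z0Real h := by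
  simp [Z0hat, Z0Real]

theorem hasSum_mul_uhat_pow_iff {a : ℕ → ℝ} {h : ℝ} :
    HasSum (fun n => (a n : ℂ) * uhat h ^ n) (Z0hat h) ↔
      HasSum (fun n => a n * uReal h ^ n) (Z0Real h) := by
  rw [uhat_ofReal, Z0hat_ofReal]
  exact_mod_cast Complex.hasSum_ofReal (f := fun n => a n * uReal h ^ n)

theorem sqrt_seven_sq : Real.sqrt 7 ^ 2 = 7 := Real.sq_sqrt (by norm_num)

theorem uc_pos : 0 < uc := by
  unfold uc tc
  positivity

theorem nuc_sq_sub_one_mul_tc : ((nuc : ℂ) ^ 2 - 1) * tc = 10 / 3 * uc := by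
  suffices h : (nuc ^ 2 - 1) * tc = 10 / 3 * uc by
    simpa using congrArg Complex.ofReal h
  unfold nuc uc
  linear_combination 4 * tc * sqrt_seven_sq

theorem tc_sq : tc ^ 2 * (64 * (7 + Real.sqrt 7) ^ 3) = 10 := by
  have hpos : 0 < 7 + Real.sqrt 7 := by positivity
  have hpow : ((7 + Real.sqrt 7) ^ ((3 : ℝ) / 2)) ^ 2 = (7 + Real.sqrt 7) ^ 3 := by
    rw [← Real.rpow_natCast, ← Real.rpow_mul hpos.le, ← Real.rpow_natCast]
    norm_num
  rw [← hpow, tc, div_pow, Real.sq_sqrt (by norm_num)]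
  field_simp
  norm_num

theorem nuc_sq_sub_one_mul_uc_sq : ((nuc : ℂ) ^ 2 - 1) * uc ^ 2 = 9 / 10 := by
  suffices h : (nuc ^ 2 - 1) * uc ^ 2 = 9 / 10 by
    simpa using congrArg Complex.ofReal h
  unfold nuc uc
  linear_combination 9 / 100 * tc_sq + 36 / 25 * 4 * (7 + Real.sqrt 7) ^ 2 * tc ^ 2 * sqrt_seven_sq

theorem cubic_pos {h : ℝ} (h2 : h < 2) : 0 < 10 - 12 * h + 6 * h ^ 2 - h ^ 3 := by
  have : 0 < (2 - h) ^ 3 := pow_pos (sub_pos.mpr h2) 3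
  linear_combination this

theorem uReal_pos {h : ℝ} (hh : h ∈ Ioo (0 : ℝ) 1) : 0 < uReal h := by
  have := cubic_pos (hh.2.trans one_lt_two)
  have := uc_pos
  have := hh.1
  unfold uReal
  positivity

theorem uReal_eq_one_sub_pow (h : ℝ) :
    uReal h = uc * (1 - (2 * (1 - h) ^ 3 + (1 - h) ^ 4) / 3) := by
  unfold uReal
  ring

theorem uReal_one : uReal 1 = uc := by
  norm_num [uReal_eq_one_sub_pow]

theorem analyticAt_uReal (h : ℝ) : AnalyticAt ℝ uReal h := by
  unfold uReal
  fun_prop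

theorem analyticAt_Z0Real (h : ℝ) : AnalyticAt ℝ Z0Real h := by
  unfold Z0Real
  fun_prop

theorem hasDerivAt_uReal (h : ℝ) :
    HasDerivAt uReal (uc * (1 - h) ^ 2 * (6 + 4 * (1 - h)) / 3) h := by
  have hx : HasDerivAt (fun h : ℝ => 1 - h) (-1) h := (hasDerivAt_id h).const_sub 1
  have hpoly := (((((hx.pow 3).const_mul 2).add (hx.pow 4)).div_const 3).const_sub 1).const_mul uc
  rw [funext uReal_eq_one_sub_pow]
  refine hpoly.congr_deriv ?_
  push_cast
  ring

theorem Z0Real_eq_one_sub_pow (h : ℝ) : Z0Real h =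
    3 / 10 * (2 + Real.sqrt 7) * (1 - (2 * (1 - h) ^ 3 + (1 - h) ^ 4) / 3)
      + (3 * (1 - h) ^ 3 + 3 * (1 - h) ^ 4 + 3 * (1 - h) ^ 5 + (1 - h) ^ 6) / 10 := by
  unfold Z0Real
  ring

/-- The derivative of `Z₀` with respect to `u`, as a function of the parameter `h`. -/
noncomputable def Z0Slope (h : ℝ) : ℝ :=
  3 / (10 * uc) * (2 + Real.sqrt 7
    - (9 + 12 * (1 - h) + 15 * (1 - h) ^ 2 + 6 * (1 - h) ^ 3) / (6 + 4 * (1 - h)))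

theorem hasDerivAt_Z0Real {h : ℝ} (hh : h < 2) :
    HasDerivAt Z0Real (Z0Slope h * (uc * (1 - h) ^ 2 * (6 + 4 * (1 - h)) / 3)) h := by
  have hx : HasDerivAt (fun h : ℝ => 1 - h) (-1) h := (hasDerivAt_id h).const_sub 1
  have hpoly := (((((hx.pow 3).const_mul 2).add (hx.pow 4)).div_const 3).const_sub 1).const_mul
    (3 / 10 * (2 + Real.sqrt 7)) |>.add <| (((((hx.pow 3).const_mul 3).add
      ((hx.pow 4).const_mul 3)).add ((hx.pow 5).const_mul 3)).add (hx.pow 6)).div_const 10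
  rw [funext Z0Real_eq_one_sub_pow]
  refine hpoly.congr_deriv ?_
  have hden : 6 + 4 * (1 - h) ≠ 0 := by linarith
  have := uc_pos.ne'
  unfold Z0Slope
  generalize hd : 6 + 4 * (1 - h) = d at hden ⊢
  field_simp
  rw [← hd]
  push_cast
  ring

theorem hasDerivAt_Z0Slope_one : HasDerivAt Z0Slope (3 / (10 * uc)) 1 := by
  have hx : HasDerivAt (fun h : ℝ => 1 - h) (-1) 1 := (hasDerivAt_id 1).const_sub 1
  have hnum := (((hx.const_mul 12).const_add 9).add ((hx.pow 2).const_mul 15)).add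
    ((hx.pow 3).const_mul 6)
  have hden := (hx.const_mul 4).const_add 6
  have hquot := ((hnum.div hden (by norm_num)).const_sub (2 + Real.sqrt 7)).const_mul
    (3 / (10 * uc))
  refine hquot.congr_deriv ?_
  norm_num

theorem hasSum_mul_uReal_pow_of_analyticOnNhd {a : ℕ → ℝ} (ha : ∀ n, 0 ≤ a n) {g : ℝ → ℝ}
    (hg : AnalyticOnNhd ℝ g (Ioo 0 1))
    (hg0 : ∀ᶠ h in 𝓝[>] 0, HasSum (fun n => a n * uReal h ^ n) (g h)) {h : ℝ}
    (hh : h ∈ Ioo (0 : ℝ) 1) : HasSum (fun n => a n * uReal h ^ n) (g h) := by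
  refine hasSum_mul_pow_comp_of_analyticOnNhd ha (fun h _ => analyticAt_uReal h)
    (fun h _ => (analyticAt_uReal h).continuousAt.continuousWithinAt) (fun h hh => ?_)
    (by simp [uReal]) hg hg0 hh
  rw [(hasDerivAt_uReal h).deriv]
  have := sub_pos.mpr hh.2
  have := uc_pos
  positivity

theorem summable_mul_uc_pow_of_isBoundedUnder {a : ℕ → ℝ} (ha : ∀ n, 0 ≤ a n) {g : ℝ → ℝ}
    (hg : AnalyticOnNhd ℝ g (Ioo 0 1)) (hg1 : (𝓝[<] 1).IsBoundedUnder (· ≤ ·) g)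
    (hg0 : ∀ᶠ h in 𝓝[>] 0, HasSum (fun n => a n * uReal h ^ n) (g h)) :
    Summable fun n => a n * uc ^ n := by
  have hnear : ∀ᶠ h in 𝓝[<] (1 : ℝ), h ∈ Ioo (0 : ℝ) 1 := Ioo_mem_nhdsLT one_pos
  have hu : Tendsto uReal (𝓝[<] 1) (𝓝 uc) := by
    simpa only [uReal_one] using (analyticAt_uReal 1).continuousAt.mono_left nhdsWithin_le_nhds
  refine summable_of_tendsto_of_isBoundedUnder_hasSum (l := 𝓝[<] 1) ?_
    (fun n => (hu.pow n).const_mul (a n))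
    (hnear.mono fun h hh => hasSum_mul_uReal_pow_of_analyticOnNhd ha hg hg0 hh) hg1
  exact hnear.mono fun h hh n => mul_nonneg (ha n) (pow_nonneg (uReal_pos hh).le n)

/-- Otherwise the sum `f` of the series is analytic at `uc` and `Z0Slope = f' ∘ uReal` near `1`,
which contradicts the chain rule: `uReal` is critical at `1` but `Z0Slope` is not. -/
theorem le_uc_of_summable {a : ℕ → ℝ} (ha : ∀ n, 0 ≤ a n)
    (hsum : ∀ᶠ h in 𝓝[>] 0, HasSum (fun n => a n * uReal h ^ n) (Z0Real h)) {r : ℝ}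
    (hr : Summable fun n => a n * r ^ n) : r ≤ uc := by
  by_contra! hucr
  have hf : AnalyticAt ℝ (fun u => ∑' n, a n * u ^ n) (uReal 1) := by
    rw [uReal_one]
    exact analyticAt_tsum_mul_pow uc_pos.le hucr hr
  have hleft : ∀ᶠ h in 𝓝[<] (1 : ℝ), ∑' n, a n * uReal h ^ n = Z0Real h :=
    eventually_of_mem (Ioo_mem_nhdsLT one_pos) fun h hh =>
      (hasSum_mul_uReal_pow_of_analyticOnNhd ha (fun k _ => analyticAt_Z0Real k) hsum hh).tsum_eq
  have heq : ∀ᶠ h in 𝓝 (1 : ℝ), ∑' n, a n * uReal h ^ n = Z0Real h :=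
    ((hf.comp (analyticAt_uReal 1)).frequently_eq_iff_eventually_eq (analyticAt_Z0Real 1)).mp
      (hleft.frequently.filter_mono (nhdsWithin_mono 1 fun h hh => ne_of_lt hh))
  have hcrit : ∀ᶠ h in 𝓝[≠] (1 : ℝ), uc * (1 - h) ^ 2 * (6 + 4 * (1 - h)) / 3 ≠ 0 := by
    filter_upwards [self_mem_nhdsWithin, nhdsWithin_le_nhds (Iio_mem_nhds one_lt_two)] with h hne h2
    have hx : 1 - h ≠ 0 := sub_ne_zero.mpr (Ne.symm hne)
    have hpos : 0 < 6 + 4 * (1 - h) := by linarith [mem_Iio.mp h2]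
    have := uc_pos
    positivity
  have hslope := eq_zero_of_hasDerivAt_comp_critical (Eventually.of_forall hasDerivAt_uReal)
    (by norm_num) hcrit hf heq (eventually_of_mem (Iio_mem_nhds one_lt_two)
      fun h hh => hasDerivAt_Z0Real hh) hasDerivAt_Z0Slope_one
  have := uc_pos
  exact absurd hslope (by positivity)

/-! ### The diagonal and the axes -/

/-- The equation satisfied by `Z (û H) (û K)`. -/
def KernelEquation (H K Z : ℂ) : Prop :=
  ((nuc : ℂ) * uhat K * uhat H - uhat H ^ 2
      - ((nuc : ℂ) ^ 2 - 1) * (tc : ℂ) * uhat K * (Z0hat H + uhat H * Z1hat K)) * (Z - Z0hat K)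
    = uhat H ^ 2 * (Z0hat K - Z0hat H)
      + ((nuc : ℂ) ^ 2 - 1) * uhat H * uhat K * (uhat H ^ 2 - (tc : ℂ) * Z0hat H * Z1hat K)

theorem KernelEquation.eq_Z0hat_of_zero {K Z : ℂ} (hZ : KernelEquation 0 K Z) (hK : uhat K ≠ 0) :
    Z = Z0hat K := by
  have hprod : (uc : ℂ) * uhat K * (Z - Z0hat K) = 0 := by
    have hu0 : uhat 0 = 0 := by simp [uhat]
    have hZ0 : Z0hat 0 = 1 := by norm_num [Z0hat]
    rw [KernelEquation, hu0, hZ0] at hZ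
    linear_combination -(3 / 10) * hZ - 3 / 10 * uhat K * (Z - Z0hat K) * nuc_sq_sub_one_mul_tc
  have huc : (uc : ℂ) ≠ 0 := mod_cast uc_pos.ne'
  exact sub_eq_zero.mp ((mul_eq_zero.mp hprod).resolve_left (mul_ne_zero huc hK))

/-- The numerator of the nonpolynomial part of `Z (û H) (û H)`, in the variable `x = 1 - H`. -/
def diagNum {R : Type*} [CommRing R] (x : R) : R :=
  6 + 15 * x + 27 * x ^ 2 + 44 * x ^ 3 + 51 * x ^ 4 + 43 * x ^ 5 + 25 * x ^ 6 + 8 * x ^ 7 + x ^ 8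

/-- The denominator of the nonpolynomial part of `Z (û H) (û H)`, in the variable `x = 1 - H`. -/
def diagDen {R : Type*} [CommRing R] (x : R) : R := 2 + 3 * x + 4 * x ^ 2 + x ^ 3

/-- The function `Z (û h) (û h)` of a real parameter `h`. -/
noncomputable def ZDiag (h : ℝ) : ℝ :=
  Z0Real h + Real.sqrt 7 / 10 * (h * (10 - 12 * h + 6 * h ^ 2 - h ^ 3))
    - h * diagNum (1 - h) / (10 * diagDen (1 - h))

theorem uhat_mul_Z1hat {H : ℂ} (hH : 10 - 12 * H + 6 * H ^ 2 - H ^ 3 ≠ 0) :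
    uhat H * Z1hat H = H / 10 * ((10 - 12 * H + 6 * H ^ 2 - H ^ 3) * (Real.sqrt 7 - 1 + H)
      - 3 * (4 - 3 * H + H ^ 2)) := by
  have huc : (uc : ℂ) ≠ 0 := mod_cast uc_pos.ne'
  unfold uhat Z1hat
  generalize 10 - 12 * H + 6 * H ^ 2 - H ^ 3 = q at hH ⊢
  field_simp

theorem kernel_diag {H : ℂ} (hH : 10 - 12 * H + 6 * H ^ 2 - H ^ 3 ≠ 0) :
    (nuc : ℂ) * uhat H * uhat H - uhat H ^ 2
        - ((nuc : ℂ) ^ 2 - 1) * tc * uhat H * (Z0hat H + uhat H * Z1hat H) =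
      -(uc * uhat H * (1 - H) ^ 3 * diagDen (1 - H) / 3) := by
  have hnuc : (nuc : ℂ) = 1 + 2 * Real.sqrt 7 := by simp [nuc]
  have hsimp : 2 * Real.sqrt 7 * uhat H - 10 / 3 * uc * (Z0hat H + uhat H * Z1hat H) =
      -(uc * (1 - H) ^ 3 * diagDen (1 - H) / 3) := by
    rw [uhat_mul_Z1hat hH]
    unfold uhat Z0hat diagDen
    ring
  linear_combination uhat H * hsimp + uhat H ^ 2 * hnuc
    - uhat H * (Z0hat H + uhat H * Z1hat H) * nuc_sq_sub_one_mul_tc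

theorem kernel_rhs_diag {H : ℂ} (hH : 10 - 12 * H + 6 * H ^ 2 - H ^ 3 ≠ 0) :
    uhat H ^ 2 * (Z0hat H - Z0hat H)
        + ((nuc : ℂ) ^ 2 - 1) * uhat H * uhat H * (uhat H ^ 2 - tc * Z0hat H * Z1hat H) =
      uc * uhat H * (1 - H) ^ 3 / 3 * (H / 10 * (diagNum (1 - H)
        - Real.sqrt 7 * (10 - 12 * H + 6 * H ^ 2 - H ^ 3) * diagDen (1 - H))) := by
  have hsqrt : (Real.sqrt 7 : ℂ) ^ 2 = 7 := mod_cast congrArg Complex.ofReal sqrt_seven_sq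
  have hcube : ((nuc : ℂ) ^ 2 - 1) * uhat H ^ 3 =
      9 / 10 * uc * (H * (10 - 12 * H + 6 * H ^ 2 - H ^ 3) / 3) ^ 3 := by
    unfold uhat
    linear_combination
      uc * (H * (10 - 12 * H + 6 * H ^ 2 - H ^ 3) / 3) ^ 3 * nuc_sq_sub_one_mul_uc_sq
  have hsimp : 9 / 10 * (H * (10 - 12 * H + 6 * H ^ 2 - H ^ 3) / 3) ^ 3
        - 10 / 3 * (Z0hat H * (uhat H * Z1hat H)) =
      (1 - H) ^ 3 / 3 * (H / 10 * (diagNum (1 - H)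
        - Real.sqrt 7 * (10 - 12 * H + 6 * H ^ 2 - H ^ 3) * diagDen (1 - H))) := by
    rw [uhat_mul_Z1hat hH]
    unfold Z0hat diagNum diagDen
    linear_combination -(H ^ 2 * (10 - 12 * H + 6 * H ^ 2 - H ^ 3) ^ 2 / 30) * hsqrt
  linear_combination uc * uhat H * hsimp + uhat H * hcube
    - uhat H * (Z0hat H * (uhat H * Z1hat H)) * nuc_sq_sub_one_mul_tc

theorem diagDen_pos {x : ℝ} (hx : 0 ≤ x) : 0 < diagDen x := by
  unfold diagDen
  positivity

theorem KernelEquation.eq_ZDiag {h : ℝ} (hh : h ∈ Ioo (0 : ℝ) 1) {Z : ℂ}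
    (hZ : KernelEquation h h Z) : Z = ZDiag h := by
  have hq : (10 - 12 * h + 6 * h ^ 2 - h ^ 3 : ℂ) ≠ 0 :=
    mod_cast (cubic_pos (hh.2.trans one_lt_two)).ne'
  have hcast : ((diagDen (1 - h) : ℝ) : ℂ) = diagDen (1 - (h : ℂ)) := by simp [diagDen]
  have hden : diagDen (1 - (h : ℂ)) ≠ 0 := by
    rw [← hcast]
    exact_mod_cast (diagDen_pos (sub_pos.mpr hh.2).le).ne'
  have hfactor : (uc : ℂ) * uhat h * (1 - h) ^ 3 / 3 ≠ 0 := by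
    rw [uhat_ofReal]
    have := uc_pos
    have := uReal_pos hh
    have := sub_pos.mpr hh.2
    exact_mod_cast (by positivity : 0 < uc * uReal h * (1 - h) ^ 3 / 3).ne'
  rw [KernelEquation, kernel_diag hq, kernel_rhs_diag hq] at hZ
  have hlin : diagDen (1 - (h : ℂ)) * (Z - Z0hat h) = h / 10 * (Real.sqrt 7
      * (10 - 12 * h + 6 * h ^ 2 - h ^ 3) * diagDen (1 - (h : ℂ)) - diagNum (1 - (h : ℂ))) :=
    mul_left_cancel₀ hfactor (by linear_combination -hZ)
  have hnum : ((diagNum (1 - h) : ℝ) : ℂ) = diagNum (1 - (h : ℂ)) := by simp [diagNum]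
  simp only [ZDiag, Complex.ofReal_add, Complex.ofReal_sub, Complex.ofReal_mul, Complex.ofReal_div,
    hcast, hnum, ← Z0hat_ofReal]
  push_cast
  field_simp
  linear_combination 10 * hlin

theorem analyticAt_ZDiag {h : ℝ} (hh : h ≤ 1) : AnalyticAt ℝ ZDiag h := by
  have := diagDen_pos (sub_nonneg.mpr hh)
  unfold ZDiag
  refine ((analyticAt_Z0Real h).add (by fun_prop)).sub (AnalyticAt.div ?_ ?_ (by positivity))
  · unfold diagNum
    fun_prop
  · unfold diagDen
    fun_prop

theorem hasSum_sum_antidiagonal_mul_uReal_pow {z : ℕ → ℕ → ℝ} (hz : ∀ p q, 0 ≤ z p q) {h : ℝ}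
    (hh : h ∈ Ioo (0 : ℝ) 1) {Z : ℂ} (hZ : KernelEquation h h Z)
    (hsum : HasSum (fun pq : ℕ × ℕ => (z pq.1 pq.2 : ℂ) * uhat h ^ pq.1 * uhat h ^ pq.2) Z) :
    HasSum (fun n => (∑ pq ∈ antidiagonal n, z pq.1 pq.2) * uReal h ^ n) (ZDiag h) := by
  rw [hasSum_sum_antidiagonal_mul_pow_iff hz (uReal_pos hh).le]
  rw [hZ.eq_ZDiag hh, uhat_ofReal] at hsum
  exact_mod_cast hsum

theorem hasSum_row_mul_uReal_pow {z : ℕ → ℕ → ℝ} {h : ℝ} (hh : h ∈ Ioo (0 : ℝ) 1) {Z : ℂ}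
    (hZ : KernelEquation 0 h Z)
    (hsum : HasSum (fun pq : ℕ × ℕ => (z pq.1 pq.2 : ℂ) * uhat 0 ^ pq.1 * uhat h ^ pq.2) Z) :
    HasSum (fun q => z 0 q * uReal h ^ q) (Z0Real h) := by
  have hu : uhat h ≠ 0 := by
    rw [uhat_ofReal]
    exact_mod_cast (uReal_pos hh).ne'
  have hu0 : uhat 0 = 0 := by simp [uhat]
  rw [hZ.eq_Z0hat_of_zero hu, hu0] at hsum
  exact hasSum_mul_uhat_pow_iff.mp
    ((hasSum_mul_zero_pow_mul_pow_iff (z := fun p q => (z p q : ℂ))).mp hsum)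

theorem summable_double_series_of_le_uc {z : ℕ → ℕ → ℝ} (hz : ∀ p q, 0 ≤ z p q)
    (hdiag : ∀ᶠ h in 𝓝[>] 0,
      HasSum (fun n => (∑ pq ∈ antidiagonal n, z pq.1 pq.2) * uReal h ^ n) (ZDiag h))
    {x y : ℝ} (hx : 0 ≤ x) (hxu : x ≤ uc) (hy : 0 ≤ y) (hyu : y ≤ uc) :
    Summable fun pq : ℕ × ℕ => z pq.1 pq.2 * x ^ pq.1 * y ^ pq.2 := by
  have huc : Summable fun n => (∑ pq ∈ antidiagonal n, z pq.1 pq.2) * uc ^ n :=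
    summable_mul_uc_pow_of_isBoundedUnder (fun n => Finset.sum_nonneg fun pq _ => hz pq.1 pq.2)
      (fun h hh => analyticAt_ZDiag hh.2.le)
      ((analyticAt_ZDiag le_rfl).continuousAt.mono_left nhdsWithin_le_nhds).isBoundedUnder_le hdiag
  have hcorner := ((hasSum_sum_antidiagonal_mul_pow_iff hz uc_pos.le).mp huc.hasSum).summable
  refine hcorner.of_nonneg_of_le (fun pq => ?_) fun pq => ?_
  all_goals
    have := hz pq.1 pq.2
    have := uc_pos
  · positivity
  · gcongr

theorem le_uc_of_summable_double_series {z : ℕ → ℕ → ℝ} (hz : ∀ p q, 0 ≤ z p q)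
    (hcol : ∀ᶠ h in 𝓝[>] 0, HasSum (fun p => z p 0 * uReal h ^ p) (Z0Real h))
    (hrow : ∀ᶠ h in 𝓝[>] 0, HasSum (fun q => z 0 q * uReal h ^ q) (Z0Real h)) {x y : ℝ}
    (hs : Summable fun pq : ℕ × ℕ => z pq.1 pq.2 * x ^ pq.1 * y ^ pq.2) : x ≤ uc ∧ y ≤ uc := by
  refine ⟨le_uc_of_summable (fun p => hz p 0) hcol ?_,
    le_uc_of_summable (fun q => hz 0 q) hrow ?_⟩
  · simpa only [Function.comp_def, pow_zero, mul_one] using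
      hs.comp_injective (Prod.mk_left_injective 0)
  · simpa only [Function.comp_def, pow_zero, mul_one] using
      hs.comp_injective (Prod.mk_right_injective 0)

/-- the double series `Σ_{p,q} z_{p,q} u^p v^q` converges absolutely
if and only if `|u| ≤ u_c` and `|v| ≤ u_c`. -/
theorem statement3
    (ρ : ℝ) (hρ : 0 < ρ)
    (z : ℕ → ℕ → ℝ) (hz_nonneg : ∀ p q, 0 ≤ z p q)
    -- `z p 0` are the Taylor coefficients of `Z₀ = Ẑ₀ ∘ û⁻¹` at `0`
    (hz0 : ∀ H : ℂ, ‖H‖ < ρ →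
      HasSum (fun p : ℕ => (z p 0 : ℂ) * uhat H ^ p) (Z0hat H))
    -- `z p q` are the Taylor coefficients at `(0,0)` of the solution `Z(u,v)` of the
    -- algebraic equation, expressed through the parametrization `u = û(H)`, `v = û(K)`
    (hZ : ∀ H K : ℂ, ‖H‖ < ρ → ‖K‖ < ρ → ∃ ZHK : ℂ,
      HasSum (fun pq : ℕ × ℕ => (z pq.1 pq.2 : ℂ) * uhat H ^ pq.1 * uhat K ^ pq.2) ZHK ∧
      ((nuc : ℂ) * uhat K * uhat H - uhat H ^ 2
          - ((nuc : ℂ) ^ 2 - 1) * (tc : ℂ) * uhat K * (Z0hat H + uhat H * Z1hat K))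
          * (ZHK - Z0hat K)
        = uhat H ^ 2 * (Z0hat K - Z0hat H)
          + ((nuc : ℂ) ^ 2 - 1) * uhat H * uhat K * (uhat H ^ 2 - (tc : ℂ) * Z0hat H * Z1hat K))
    :
    ∀ u v : ℂ,
      Summable (fun pq : ℕ × ℕ => ‖(z pq.1 pq.2 : ℂ) * u ^ pq.1 * v ^ pq.2‖) ↔
        (‖u‖ ≤ uc ∧ ‖v‖ ≤ uc) := by
  have hsmall : ∀ᶠ h : ℝ in 𝓝[>] 0, h ∈ Ioo (0 : ℝ) 1 ∧ ‖(h : ℂ)‖ < ρ := by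
    filter_upwards [Ioo_mem_nhdsGT one_pos, Ioo_mem_nhdsGT hρ] with h h01 hhρ
    exact ⟨h01, by simpa [abs_of_pos hhρ.1] using hhρ.2⟩
  have hcol : ∀ᶠ h in 𝓝[>] 0, HasSum (fun p => z p 0 * uReal h ^ p) (Z0Real h) :=
    hsmall.mono fun h hh => hasSum_mul_uhat_pow_iff.mp (hz0 h hh.2)
  have hrow : ∀ᶠ h in 𝓝[>] 0, HasSum (fun q => z 0 q * uReal h ^ q) (Z0Real h) :=
    hsmall.mono fun h hh => by
      obtain ⟨Z, hsum, hker⟩ := hZ 0 h (by simpa using hρ) hh.2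
      exact hasSum_row_mul_uReal_pow hh.1 hker hsum
  have hdiag : ∀ᶠ h in 𝓝[>] 0,
      HasSum (fun n => (∑ pq ∈ antidiagonal n, z pq.1 pq.2) * uReal h ^ n) (ZDiag h) :=
    hsmall.mono fun h hh => by
      obtain ⟨Z, hsum, hker⟩ := hZ h h hh.2 hh.2
      exact hasSum_sum_antidiagonal_mul_uReal_pow hz_nonneg hh.1 hker hsum
  intro u v
  simp only [norm_mul, norm_pow, Complex.norm_of_nonneg (hz_nonneg _ _)]
  exact ⟨le_uc_of_summable_double_series hz_nonneg hcol hrow, fun ⟨hu, hv⟩ =>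
    summable_double_series_of_le_uc hz_nonneg hdiag (norm_nonneg u) hu (norm_nonneg v) hv⟩
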